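/- arXiv:1003.0646 — 2 statements merged into one kernel-verified Lean document; each statement's English description precedes it below -/
import Mathlib

section
/- Let n ≥ 1, let D ⊂ ℝ^n be a nonempty bounded convex open set, and let γ ∈ [0, n+2). Then there exists a constant C > 0, depending on D and γ, such that for every smooth function v : ℝ^n → ℝ one has ∫_D ∫_D |v(x) − v(y)|² / |x − y|^γ dx dy ≤ C · ∫_D |∇v(z)|² dz. Moreover, for γ = 0 one may take C = C_n · vol(D) · diam(D)², with C_n depending only on n. -/
open MeasureTheory
open scoped ENNReal




lemma aux_ptw {E : Type*} [NormedAddCommGroup E] [NormedSpace ℝ E] {D : Set E} (hc : Convex ℝ D)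
    (v : E → ℝ) (hv : ContDiff ℝ (⊤ : ℕ∞) v) {x y : E} (hx : x ∈ D) (hy : y ∈ D) :
    ENNReal.ofReal (|v x - v y| ^ 2) ≤ ENNReal.ofReal (‖x - y‖ ^ 2) *
      ∫⁻ t in Set.Icc (0:ℝ) 1, D.indicator (fun z => ENNReal.ofReal (‖fderiv ℝ v z‖ ^ 2))
        (x + t • (y - x)) := by
  have hd : Differentiable ℝ v := hv.differentiable (by simp)
  have hfc : Continuous (fderiv ℝ v) := hv.continuous_fderiv (by simp)
  set f : ℝ → ℝ := fun t => fderiv ℝ v (x + t • (y - x)) (y - x) with hf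
  have hfcont : Continuous f := by
    have : Continuous fun t : ℝ => fderiv ℝ v (x + t • (y - x)) := hfc.comp (by fun_prop)
    exact this.clm_apply continuous_const
  have hint : ∫ t in (0:ℝ)..1, f t = v y - v x := by
    have h : ∀ t ∈ Set.uIcc (0:ℝ) 1, HasDerivAt (fun t : ℝ => v (x + t • (y - x))) (f t) t := by
      intro t _
      have h1 : HasDerivAt (fun t : ℝ => x + t • (y - x)) (y - x) t := by
        simpa using ((hasDerivAt_id t).smul_const (y - x)).const_add x
      exact (hd _).hasFDerivAt.comp_hasDerivAt t h1
    rw [intervalIntegral.integral_eq_sub_of_hasDerivAt h (hfcont.intervalIntegrable _ _)]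
    simp
  set m := v y - v x
  have hcs : m ^ 2 ≤ ∫ t in (0:ℝ)..1, (f t) ^ 2 := by
    have h0 : 0 ≤ ∫ t in (0:ℝ)..1, (f t - m) ^ 2 :=
      intervalIntegral.integral_nonneg (by norm_num) (fun _ _ => sq_nonneg _)
    have h1 : ∫ t in (0:ℝ)..1, (f t - m) ^ 2 = (∫ t in (0:ℝ)..1, (f t)^2) - 2 * m * m + m^2 := by
      have : ∀ t, (f t - m)^2 = (f t)^2 - 2 * m * f t + m^2 := fun t => by ring
      simp_rw [this]
      rw [intervalIntegral.integral_add, intervalIntegral.integral_sub,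
        intervalIntegral.integral_const_mul, hint]
      · simp
      all_goals exact Continuous.intervalIntegrable (by fun_prop) _ _
    nlinarith
  set g : ℝ → ℝ := fun t => ‖x - y‖ ^ 2 * ‖fderiv ℝ v (x + t • (y - x))‖ ^ 2 with hg
  have hgcont : Continuous g := by
    have : Continuous fun t : ℝ => fderiv ℝ v (x + t • (y - x)) := hfc.comp (by fun_prop)
    fun_prop
  have hle : m ^ 2 ≤ ∫ t in (0:ℝ)..1, g t := by
    refine hcs.trans (intervalIntegral.integral_mono_on (by norm_num)
      ((hfcont.pow 2).intervalIntegrable _ _) (hgcont.intervalIntegrable _ _) ?_)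
    intro t _
    have := (fderiv ℝ v (x + t • (y - x))).le_opNorm (y - x)
    rw [norm_sub_rev, Real.norm_eq_abs] at this
    calc (f t)^2 = |f t| ^ 2 := (sq_abs _).symm
      _ ≤ (‖fderiv ℝ v (x + t • (y - x))‖ * ‖x - y‖)^2 := by gcongr
      _ = g t := by simp only [hg]; ring
  have hkey : ENNReal.ofReal (∫ t in (0:ℝ)..1, g t) = ∫⁻ t in Set.Icc (0:ℝ) 1, ENNReal.ofReal (g t) := by
    rw [intervalIntegral.integral_of_le (by norm_num), ← integral_Icc_eq_integral_Ioc]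
    exact ofReal_integral_eq_lintegral_ofReal (hgcont.integrableOn_Icc)
      (Filter.Eventually.of_forall fun t => by positivity)
  calc ENNReal.ofReal (|v x - v y| ^ 2) = ENNReal.ofReal (m^2) := by
        rw [abs_sub_comm, sq_abs]
    _ ≤ _ := ENNReal.ofReal_le_ofReal hle
    _ = _ := hkey
    _ = ∫⁻ t in Set.Icc (0:ℝ) 1, ENNReal.ofReal (‖x - y‖ ^ 2) *
         D.indicator (fun z => ENNReal.ofReal (‖fderiv ℝ v z‖ ^ 2)) (x + t • (y - x)) := by
        refine setLIntegral_congr_fun measurableSet_Icc fun t ht => ?_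
        have : x + t • (y - x) ∈ D := hc.add_smul_sub_mem hx hy ht
        simp only [Set.indicator_of_mem this, hg]
        rw [ENNReal.ofReal_mul (by positivity)]
    _ = _ := lintegral_const_mul' _ _ ENNReal.ofReal_ne_top

abbrev EE (n : ℕ) := EuclideanSpace ℝ (Fin n)

lemma aux_scale {n : ℕ} (G : EE n → ℝ≥0∞) (hG : Measurable G) (s : ℝ) (hs : 1/2 ≤ s) (c : EE n) :
    ∫⁻ x, G (c + s • x) ≤ 2 ^ n * ∫⁻ x, G x := by
  have h1 : ∫⁻ x, G (c + s • x) = ∫⁻ x, G (c + x) ∂(Measure.map (fun x => s • x) (volume : Measure (EE n))) := by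
    rw [lintegral_map (by fun_prop) (by fun_prop)]
  have hs0 : s ≠ 0 := by linarith
  rw [h1, Measure.map_addHaar_smul _ hs0, lintegral_smul_measure, lintegral_add_left_eq_self, smul_eq_mul]
  gcongr
  simp only [finrank_euclideanSpace, Fintype.card_fin]
  rw [abs_of_nonneg (by positivity)]
  have : (s^n)⁻¹ ≤ (2:ℝ)^n := by
    rw [← inv_pow]; 
    gcongr
    rw [inv_le_comm₀ (by linarith) (by norm_num)]; linarith
  calc _ ≤ ENNReal.ofReal (2^n) := ENNReal.ofReal_le_ofReal this
    _ = _ := by rw [ENNReal.ofReal_pow (by norm_num)]; simp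

lemma aux_W {n : ℕ} (G W : EE n → ℝ≥0∞) (hG : Measurable G) (hW : Measurable W) :
    ∫⁻ x, ∫⁻ y, W (y - x) * ∫⁻ t in Set.Icc (0:ℝ) 1, G (x + t • (y - x)) = 
      (∫⁻ h, W h) * ∫⁻ z, G z := by
  calc _ = ∫⁻ x, ∫⁻ h, W h * ∫⁻ t in Set.Icc (0:ℝ) 1, G (x + t • h) := by
        congr! 2 with x
        exact lintegral_sub_right_eq_self (fun h => W h * ∫⁻ t in Set.Icc (0:ℝ) 1, G (x + t • h)) x
    _ = ∫⁻ h, ∫⁻ x, W h * ∫⁻ t in Set.Icc (0:ℝ) 1, G (x + t • h) := by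
        refine lintegral_lintegral_swap (Measurable.aemeasurable ?_)
        refine (hW.comp measurable_snd).mul ?_
        exact Measurable.lintegral_prod_right' (f := fun (p : (EE n × EE n) × ℝ) => G (p.1.1 + p.2 • p.1.2)) (by fun_prop)
    _ = ∫⁻ h, W h * ∫⁻ z, G z := by
        congr! 2 with h
        rw [lintegral_const_mul _ (Measurable.lintegral_prod_right' (f := fun (p : (EE n) × ℝ) => G (p.1 + p.2 • h)) (by fun_prop)),
          lintegral_lintegral_swap (by fun_prop)]
        congr 1
        simp_rw [lintegral_add_right_eq_self G]
        simp
    _ = _ := lintegral_mul_const _ hW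

lemma aux_2 {n : ℕ} (G : EE n → ℝ≥0∞) (hG : Measurable G) (D : Set (EE n)) :
    ∫⁻ x in D, ∫⁻ y in D, ∫⁻ t in Set.Icc (0:ℝ) 1, G (x + t • (y - x)) ≤
      2 ^ n * volume D * ∫⁻ z, G z := by
  have hm : Measurable (fun (p : (EE n × EE n) × ℝ) => G (p.1.1 + p.2 • (p.1.2 - p.1.1))) := by fun_prop
  have hm2 : ∀ x, Measurable (fun (p : EE n × ℝ) => G (x + p.2 • (p.1 - x))) := fun x => by fun_prop
  have hm3 : ∀ t : ℝ, Measurable (fun (p : EE n × EE n) => G (p.1 + t • (p.2 - p.1))) := fun x => by fun_prop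
  have hm4 : Measurable fun p : EE n × ℝ => ∫⁻ y in D, G (p.1 + p.2 • (y - p.1)) :=
    Measurable.lintegral_prod_right' (f := fun (q : (EE n × ℝ) × EE n) => G (q.1.1 + q.1.2 • (q.2 - q.1.1))) (by fun_prop)
  set K := 2 ^ n * volume D * ∫⁻ z, G z
  have key : ∀ t ∈ Set.Icc (0:ℝ) 1, ∫⁻ x in D, ∫⁻ y in D, G (x + t • (y - x)) ≤ K := by
    have kk : ∀ s : ℝ, 1/2 ≤ s → ∫⁻ x in D, ∫⁻ y in D, G (x + s • (y - x)) ≤ K := by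
      intro s hs
      calc _ ≤ ∫⁻ x in D, 2 ^ n * ∫⁻ z, G z := by
            refine lintegral_mono fun x => ?_
            refine (setLIntegral_le_lintegral _ _).trans ?_
            have := aux_scale G hG s hs (x - s • x)
            have heq : ∀ y : EE n, x + s • (y - x) = (x - s • x) + s • y := fun y => by module
            simp_rw [heq]
            exact this
        _ = K := by simp only [K, lintegral_const, Measure.restrict_apply_univ]; ring
    intro t ht
    rcases le_total (1/2) t with h | h
    · exact kk t h
    · rw [lintegral_lintegral_swap (hm3 t).aemeasurable]
      convert kk (1 - t) (by linarith) using 6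
      module
  calc _ = ∫⁻ x in D, ∫⁻ t in Set.Icc (0:ℝ) 1, ∫⁻ y in D, G (x + t • (y - x)) := by
        congr! 2 with x
        exact lintegral_lintegral_swap (hm2 x).aemeasurable
    _ = ∫⁻ t in Set.Icc (0:ℝ) 1, ∫⁻ x in D, ∫⁻ y in D, G (x + t • (y - x)) := 
        lintegral_lintegral_swap hm4.aemeasurable
    _ ≤ ∫⁻ t in Set.Icc (0:ℝ) 1, K := setLIntegral_mono measurable_const key
    _ = K := by simp

lemma aux_fin {n : ℕ} (hn : 1 ≤ n) (γ : ℝ) (hγ : γ < (n : ℝ) + 2) (R : ℝ) (hR : 0 < R) :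
    ∫⁻ h : EE n, ENNReal.ofReal ((Set.Iio R).indicator (fun r : ℝ => r ^ 2 / r ^ γ) ‖h‖) ≠ ∞ := by
  have : Nonempty (Fin n) := ⟨⟨0, hn⟩⟩
  have : Nontrivial (EE n) := by infer_instance
  have : Integrable (fun h : EE n => (Set.Iio R).indicator (fun r : ℝ => r ^ 2 / r ^ γ) ‖h‖) volume := by
    rw [integrable_fun_norm_addHaar volume]
    simp only [finrank_euclideanSpace, Fintype.card_fin]
    have h1 : IntegrableOn (fun r : ℝ => r ^ ((n:ℝ) + 1 - γ)) (Set.Ioo 0 R) :=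
      (intervalIntegral.integrableOn_Ioo_rpow_iff hR).2 (by linarith)
    have h2 : IntegrableOn ((Set.Ioo 0 R).indicator (fun r : ℝ => r ^ ((n:ℝ) + 1 - γ))) (Set.Ioi 0) :=
      (h1.integrable_indicator measurableSet_Ioo).integrableOn
    refine h2.congr_fun ?_ measurableSet_Ioi
    intro r hr
    have hr : 0 < r := hr
    by_cases h : r < R
    · simp only [Set.indicator, Set.mem_Ioo, Set.mem_Iio, hr, h, true_and, if_true, smul_eq_mul]
      rw [Real.rpow_sub hr, ← mul_div_assoc, ← pow_add, ← Real.rpow_natCast, ]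
      congr 2
      have : n - 1 + 2 = n + 1 := by omega
      rw [this]; push_cast; rfl
    · simp [Set.indicator, h]
  refine ((hasFiniteIntegral_iff_ofReal (Filter.Eventually.of_forall fun h => ?_)).1 this.2).ne
  show 0 ≤ (Set.Iio R).indicator (fun r : ℝ => r ^ 2 / r ^ γ) ‖h‖
  by_cases hh : ‖h‖ < R
  · rw [Set.indicator_of_mem (by exact hh)]
    positivity
  · rw [Set.indicator_of_notMem (by exact hh)]

theorem stmt13 (n : ℕ) (hn : 1 ≤ n) (γ : ℝ) (hγ0 : 0 ≤ γ) (hγ : γ < (n : ℝ) + 2) :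
    (∀ D : Set (EuclideanSpace ℝ (Fin n)), D.Nonempty → IsOpen D → Convex ℝ D →
        Bornology.IsBounded D →
      ∃ C : ℝ, 0 < C ∧ ∀ v : EuclideanSpace ℝ (Fin n) → ℝ, ContDiff ℝ (⊤ : ℕ∞) v →
        (∫⁻ x in D, ∫⁻ y in D, ENNReal.ofReal (|v x - v y| ^ 2 / ‖x - y‖ ^ γ)) ≤
          ENNReal.ofReal C * ∫⁻ z in D, ENNReal.ofReal (‖fderiv ℝ v z‖ ^ 2)) ∧
    (∃ Cn : ℝ, 0 < Cn ∧
      ∀ D : Set (EuclideanSpace ℝ (Fin n)), D.Nonempty → IsOpen D → Convex ℝ D →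
        Bornology.IsBounded D →
        ∀ v : EuclideanSpace ℝ (Fin n) → ℝ, ContDiff ℝ (⊤ : ℕ∞) v →
          (∫⁻ x in D, ∫⁻ y in D, ENNReal.ofReal (|v x - v y| ^ 2)) ≤
            ENNReal.ofReal (Cn * (volume D).toReal * Metric.diam D ^ 2) *
              ∫⁻ z in D, ENNReal.ofReal (‖fderiv ℝ v z‖ ^ 2)) := by
  have hGm : ∀ (D : Set (EE n)) (v : EE n → ℝ), IsOpen D → ContDiff ℝ (⊤ : ℕ∞) v →
      Measurable (D.indicator (fun z => ENNReal.ofReal (‖fderiv ℝ v z‖ ^ 2))) := by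
    intro D v ho hv
    have hfc : Continuous (fderiv ℝ v) := hv.continuous_fderiv (by simp)
    refine Measurable.indicator ?_ ho.measurableSet
    exact (ENNReal.continuous_ofReal.comp (hfc.norm.pow 2)).measurable
  constructor
  · intro D _ ho hc hb
    set R := Metric.diam D + 1
    have hR : 0 < R := by positivity
    set W : EE n → ℝ≥0∞ := fun h =>
      ENNReal.ofReal ((Set.Iio R).indicator (fun r : ℝ => r ^ 2 / r ^ γ) ‖h‖) with hW
    have hWm : Measurable W := by
      have : Measurable ((Set.Iio R).indicator (fun r : ℝ => r ^ 2 / r ^ γ)) :=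
        Measurable.indicator (by fun_prop) measurableSet_Iio
      exact (this.comp measurable_norm).ennreal_ofReal
    have hfin : ∫⁻ h, W h ≠ ∞ := aux_fin hn γ hγ R hR
    refine ⟨(∫⁻ h, W h).toReal + 1, by positivity, fun v hv => ?_⟩
    set G := D.indicator (fun z => ENNReal.ofReal (‖fderiv ℝ v z‖ ^ 2)) with hG
    have hptw : ∀ x ∈ D, ∀ y ∈ D, ENNReal.ofReal (|v x - v y| ^ 2 / ‖x - y‖ ^ γ) ≤
        W (y - x) * ∫⁻ t in Set.Icc (0:ℝ) 1, G (x + t • (y - x)) := by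
      intro x hx y hy
      have h1 := aux_ptw hc v hv hx hy
      have hlt : ‖x - y‖ < R := by
        have := Metric.dist_le_diam_of_mem hb hx hy
        rw [dist_eq_norm] at this
        linarith
      have hWe : W (y - x) = ENNReal.ofReal (‖x - y‖ ^ 2) * ENNReal.ofReal ((‖x - y‖ ^ γ)⁻¹) := by
        rw [← ENNReal.ofReal_mul (by positivity), ← div_eq_mul_inv]
        simp only [hW, norm_sub_rev y x]
        rw [Set.indicator_of_mem (by exact hlt)]
      rw [hWe, div_eq_mul_inv, ENNReal.ofReal_mul (by positivity), mul_right_comm]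
      gcongr
    calc _ ≤ ∫⁻ x in D, ∫⁻ y in D, W (y - x) * ∫⁻ t in Set.Icc (0:ℝ) 1, G (x + t • (y - x)) :=
          setLIntegral_mono' ho.measurableSet fun x hx => 
            setLIntegral_mono' ho.measurableSet fun y hy => hptw x hx y hy
      _ ≤ ∫⁻ x, ∫⁻ y, W (y - x) * ∫⁻ t in Set.Icc (0:ℝ) 1, G (x + t • (y - x)) :=
          (setLIntegral_le_lintegral _ _).trans 
            (lintegral_mono fun x => setLIntegral_le_lintegral _ _)
      _ = (∫⁻ h, W h) * ∫⁻ z, G z := aux_W G W (hGm D v ho hv) hWm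
      _ ≤ _ := by
          rw [hG, lintegral_indicator ho.measurableSet]
          gcongr
          rw [ENNReal.le_ofReal_iff_toReal_le hfin (by positivity)]
          linarith
  · refine ⟨2 ^ n, by positivity, fun D _ ho hc hb v hv => ?_⟩
    set G := D.indicator (fun z => ENNReal.ofReal (‖fderiv ℝ v z‖ ^ 2)) with hG
    have hptw : ∀ x ∈ D, ∀ y ∈ D, ENNReal.ofReal (|v x - v y| ^ 2) ≤
        ENNReal.ofReal (Metric.diam D ^ 2) * ∫⁻ t in Set.Icc (0:ℝ) 1, G (x + t • (y - x)) := by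
      intro x hx y hy
      refine (aux_ptw hc v hv hx hy).trans ?_
      gcongr
      rw [← dist_eq_norm]
      exact Metric.dist_le_diam_of_mem hb hx hy
    calc _ ≤ ∫⁻ x in D, ∫⁻ y in D, ENNReal.ofReal (Metric.diam D ^ 2) * 
            ∫⁻ t in Set.Icc (0:ℝ) 1, G (x + t • (y - x)) :=
          setLIntegral_mono' ho.measurableSet fun x hx => 
            setLIntegral_mono' ho.measurableSet fun y hy => hptw x hx y hy
      _ = ENNReal.ofReal (Metric.diam D ^ 2) * ∫⁻ x in D, ∫⁻ y in D,
            ∫⁻ t in Set.Icc (0:ℝ) 1, G (x + t • (y - x)) := by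
          simp_rw [lintegral_const_mul' _ _ ENNReal.ofReal_ne_top]
      _ ≤ ENNReal.ofReal (Metric.diam D ^ 2) * (2 ^ n * volume D * ∫⁻ z, G z) := by
          gcongr
          exact aux_2 G (hGm D v ho hv) D
      _ = _ := by
          rw [hG, lintegral_indicator ho.measurableSet, ENNReal.ofReal_mul (by positivity),
            ENNReal.ofReal_mul (by positivity), ENNReal.ofReal_toReal hb.measure_lt_top.ne,
            ENNReal.ofReal_pow (by norm_num : (0:ℝ) ≤ 2)]
          simp only [ENNReal.ofReal_ofNat]
          ring
end

section
/- Let n ≥ 1, γ ∈ [0, n+2), and N ≥ 1 an integer. There exists a constant C > 0, depending only on n, N and γ, such that for every r > 0, every x₀ ∈ ℝ^n, and every smooth function v : ℝ^n → ℝ satisfying the mean value conditions ∫_{B_r(x₀)} ∂^α v(x) dx = 0 for every multi-index α with |α| ≤ N, one has ∫_{B_r(x₀)} ∫_{B_r(x₀)} |v(x) − v(y)|² / |x − y|^γ dy dx ≤ C · r^{2N − γ} · ∫_{B_r(x₀)} ∫_{B_r(x₀)} ‖∇^N v(x) − ∇^N v(y)‖² dx dy. -/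
open MeasureTheory
open scoped ENNReal

lemma aux_cs {α : Type*} [MeasurableSpace α] (μ : Measure α) (f : α → ℝ≥0∞)
    (hf : AEMeasurable f μ) :
    (∫⁻ a, f a ∂μ) ^ 2 ≤ μ Set.univ * ∫⁻ a, f a ^ 2 ∂μ := by
  have h := ENNReal.lintegral_mul_le_Lp_mul_Lq μ (p := 2) (q := 2)
    Real.HolderConjugate.two_two hf (aemeasurable_const (b := (1 : ℝ≥0∞)))
  simp only [Pi.mul_apply, mul_one, lintegral_const,
    ENNReal.rpow_ofNat] at h
  calc (∫⁻ a, f a ∂μ) ^ 2 ≤ _ := pow_le_pow_left' h 2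
    _ = μ Set.univ * ∫⁻ a, f a ^ 2 ∂μ := by
      rw [mul_pow, ← ENNReal.rpow_natCast, ← ENNReal.rpow_natCast, ← ENNReal.rpow_mul,
        ← ENNReal.rpow_mul]
      norm_num
      rw [mul_comm]

lemma aux_scale_s14 {n : ℕ} (c : ℝ) (hc : 0 < c) (f : EuclideanSpace ℝ (Fin n) → ℝ≥0∞)
    (hf : Measurable f) :
    ∫⁻ x, f (c • x) = ENNReal.ofReal (c ^ (-(n : ℝ))) * ∫⁻ x, f x := by
  have h := Measure.map_addHaar_smul (volume : Measure (EuclideanSpace ℝ (Fin n))) hc.ne'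
  rw [← lintegral_map (f := f) (g := fun x => c • x) hf (measurable_const_smul c)]
  have h2 : Measure.map (fun x => c • x) (volume : Measure (EuclideanSpace ℝ (Fin n))) = _ := h
  rw [h2, lintegral_smul_measure, smul_eq_mul, abs_of_pos (by positivity)]
  simp [Real.rpow_neg hc.le]

lemma aux_ball {n : ℕ} (hn : 1 ≤ n) (s : ℝ) (hs : -(n : ℝ) < s) :
    ∃ K : ℝ, 0 ≤ K ∧ ∀ R : ℝ, 0 < R →
      ∫⁻ u in Metric.ball (0 : EuclideanSpace ℝ (Fin n)) R, ENNReal.ofReal (‖u‖ ^ s) =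
        ENNReal.ofReal (K * R ^ (n + s)) := by
  have hint : IntegrableOn (fun u : EuclideanSpace ℝ (Fin n) => ‖u‖ ^ s) (Metric.ball 0 1) := by
    refine integrableOn_ball_of_norm_le_rpow (C := 1) (α := -s) (by simpa using hn) ?_ ?_ ?_
    · simp; linarith
    · refine ae_of_all _ fun x => ?_
      simp [abs_of_nonneg (Real.rpow_nonneg (norm_nonneg x) s)]
    · exact (by fun_prop : Measurable (fun u : EuclideanSpace ℝ (Fin n) => ‖u‖ ^ s)).aestronglyMeasurable
  set h : EuclideanSpace ℝ (Fin n) → ℝ≥0∞ :=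
    (Metric.ball 0 1).indicator (fun u => ENNReal.ofReal (‖u‖ ^ s)) with hh
  have hm : Measurable h := Measurable.indicator (by fun_prop) measurableSet_ball
  refine ⟨∫ u in Metric.ball (0 : EuclideanSpace ℝ (Fin n)) 1, ‖u‖ ^ s,
    integral_nonneg fun u => by positivity, fun R hR => ?_⟩
  have h1 : ∫⁻ u, h u = ENNReal.ofReal (∫ u in Metric.ball (0 : EuclideanSpace ℝ (Fin n)) 1, ‖u‖ ^ s) := by
    rw [hh, lintegral_indicator measurableSet_ball,
      ofReal_integral_eq_lintegral_ofReal hint (ae_of_all _ fun u => by positivity)]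
  have h2 := aux_scale_s14 R⁻¹ (inv_pos.2 hR) h hm
  rw [← lintegral_indicator measurableSet_ball]
  have h3 : (Metric.ball (0 : EuclideanSpace ℝ (Fin n)) R).indicator
      (fun u => ENNReal.ofReal (‖u‖ ^ s)) = fun u => ENNReal.ofReal (R ^ s) * h (R⁻¹ • u) := by
    funext u
    have : (R⁻¹ • u ∈ Metric.ball (0 : EuclideanSpace ℝ (Fin n)) 1) ↔ u ∈ Metric.ball 0 R := by
      simp only [mem_ball_zero_iff, norm_smul, norm_inv, Real.norm_eq_abs, abs_of_pos hR]
      rw [inv_mul_lt_iff₀ hR, mul_one]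
    by_cases hu : u ∈ Metric.ball (0 : EuclideanSpace ℝ (Fin n)) R
    · rw [hh, Set.indicator_of_mem hu, Set.indicator_of_mem (this.2 hu),
        ← ENNReal.ofReal_mul (by positivity), ← Real.mul_rpow hR.le (norm_nonneg _), norm_smul,
        norm_inv, Real.norm_eq_abs, abs_of_pos hR, mul_inv_cancel_left₀ hR.ne']
    · rw [hh, Set.indicator_of_notMem hu, Set.indicator_of_notMem (fun h => hu (this.1 h)), mul_zero]
  rw [h3, lintegral_const_mul _ (by fun_prop), h2, h1, ← mul_assoc,
    ← ENNReal.ofReal_mul (by positivity), ← ENNReal.ofReal_mul (by positivity)]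
  congr 1
  rw [Real.inv_rpow hR.le, Real.rpow_neg hR.le, inv_inv, Real.rpow_add hR]; ring

lemma aux_sub {n : ℕ} (s : ℝ) (hs : -(n : ℝ) < s) (t : ℝ) (ht : t ≤ 1 / 2)
    (G : EuclideanSpace ℝ (Fin n) → ℝ≥0∞) (hG : Measurable G) (y : EuclideanSpace ℝ (Fin n)) :
    ∫⁻ x, ENNReal.ofReal (‖x - y‖ ^ s) * G (x + t • (y - x)) ≤
      ENNReal.ofReal (2 ^ (n + s)) * ∫⁻ z, ENNReal.ofReal (‖z - y‖ ^ s) * G z := by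
  set f : EuclideanSpace ℝ (Fin n) → ℝ≥0∞ := fun u => ENNReal.ofReal (‖u‖ ^ s) * G (y + u) with hf
  have hfm : Measurable f := by fun_prop
  have h1 : ∫⁻ z, ENNReal.ofReal (‖z - y‖ ^ s) * G z = ∫⁻ u, f u := by
    rw [← lintegral_sub_right_eq_self f y]
    simp [hf]
  have h0 : 0 < 1 - t := by linarith
  have h2 : ∫⁻ x, ENNReal.ofReal (‖x - y‖ ^ s) * G (x + t • (y - x)) =
      ∫⁻ u, ENNReal.ofReal ((1 - t) ^ (-s)) * f ((1 - t) • u) := by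
    rw [← lintegral_sub_right_eq_self (fun u => ENNReal.ofReal ((1 - t) ^ (-s)) * f ((1 - t) • u)) y]
    congr 1; funext x
    simp only [hf]
    rw [← mul_assoc, ← ENNReal.ofReal_mul (by positivity), norm_smul, Real.norm_eq_abs,
      abs_of_pos h0, Real.mul_rpow h0.le (norm_nonneg _), ← mul_assoc, ← Real.rpow_add h0]
    simp only [neg_add_cancel, Real.rpow_zero, one_mul]
    congr 2
    module
  rw [h1, h2, lintegral_const_mul _ (by fun_prop), aux_scale_s14 _ h0 f hfm, ← mul_assoc,
    ← ENNReal.ofReal_mul (by positivity), ← Real.rpow_add h0]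
  gcongr
  rw [show -s + -(n : ℝ) = -(n + s) by ring, Real.rpow_neg h0.le, ← Real.inv_rpow h0.le]
  apply Real.rpow_le_rpow (by positivity) _ (by linarith)
  rw [inv_le_comm₀ h0 two_pos]; linarith

lemma aux_path {n : ℕ} {F : Type} [NormedAddCommGroup F] [NormedSpace ℝ F] [CompleteSpace F]
    (w : EuclideanSpace ℝ (Fin n) → F) (hw : ContDiff ℝ 1 w) (x y : EuclideanSpace ℝ (Fin n)) :
    ‖w x - w (x + (1 / 2 : ℝ) • (y - x))‖ₑ ^ 2 ≤ ENNReal.ofReal (‖x - y‖ ^ 2) *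
      ∫⁻ t in Set.Ioc (0 : ℝ) (1 / 2), ‖fderiv ℝ w (x + t • (y - x))‖ₑ ^ 2 := by
  have hd : Continuous (fderiv ℝ w) := hw.continuous_fderiv one_ne_zero
  have hD : ∀ t : ℝ, HasDerivAt (fun t : ℝ => w (x + t • (y - x)))
      (fderiv ℝ w (x + t • (y - x)) (y - x)) t := by
    intro t
    have h1 : HasDerivAt (fun t : ℝ => x + t • (y - x)) (y - x) t := by
      simpa using ((hasDerivAt_id t).smul_const (y - x)).const_add x
    exact ((hw.differentiable one_ne_zero) _).hasFDerivAt.comp_hasDerivAt t h1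
  have hftc := intervalIntegral.integral_eq_sub_of_hasDerivAt (a := (0:ℝ)) (b := 1/2)
    (fun t _ => hD t) (Continuous.intervalIntegrable (by fun_prop) _ _)
  rw [intervalIntegral.integral_of_le (by norm_num)] at hftc
  simp only [zero_smul, add_zero] at hftc
  rw [← enorm_neg, neg_sub, ← hftc]
  have h1 := enorm_integral_le_lintegral_enorm (μ := volume.restrict (Set.Ioc (0:ℝ) (1/2)))
    (fun t : ℝ => fderiv ℝ w (x + t • (y - x)) (y - x))
  calc _ ≤ (∫⁻ t in Set.Ioc (0 : ℝ) (1 / 2), ‖fderiv ℝ w (x + t • (y - x))‖ₑ * ‖y - x‖ₑ) ^ 2 := by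
        refine pow_le_pow_left' (h1.trans ?_) 2
        exact lintegral_mono fun t => ContinuousLinearMap.le_opENorm _ _
    _ ≤ (volume.restrict (Set.Ioc (0:ℝ) (1/2))) Set.univ * ∫⁻ t in Set.Ioc (0 : ℝ) (1 / 2),
          (‖fderiv ℝ w (x + t • (y - x))‖ₑ * ‖y - x‖ₑ) ^ 2 :=
        aux_cs _ _ (by
          apply AEMeasurable.mul_const
          apply Continuous.aemeasurable; fun_prop)
    _ ≤ 1 * ∫⁻ t in Set.Ioc (0 : ℝ) (1 / 2),
          (‖fderiv ℝ w (x + t • (y - x))‖ₑ * ‖y - x‖ₑ) ^ 2 := by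
        gcongr
        simp only [Measure.restrict_apply_univ, Real.volume_Ioc]
        rw [ENNReal.ofReal_le_one]; norm_num
    _ = _ := by
        simp only [mul_pow, one_mul]
        rw [lintegral_mul_const _ (by apply Continuous.measurable; fun_prop), mul_comm]
        rw [norm_sub_rev, ENNReal.ofReal_pow (norm_nonneg _), ofReal_norm]

lemma aux_avg {n : ℕ} {F : Type} [NormedAddCommGroup F] [NormedSpace ℝ F] [CompleteSpace F]
    (w : EuclideanSpace ℝ (Fin n) → F) (hw : Continuous w) (x₀ : EuclideanSpace ℝ (Fin n)) (r : ℝ)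
    (hr : 0 < r) (h0 : ∫ x in Metric.ball x₀ r, w x = 0) :
    ∫⁻ x in Metric.ball x₀ r, ‖w x‖ₑ ^ 2 ≤ (volume (Metric.ball x₀ r))⁻¹ *
      ∫⁻ x in Metric.ball x₀ r, ∫⁻ y in Metric.ball x₀ r, ‖w x - w y‖ₑ ^ 2 := by
  set V := volume (Metric.ball x₀ r) with hV
  have hV0 : V ≠ 0 := (Metric.measure_ball_pos _ _ hr).ne'
  have hVt : V ≠ ⊤ := measure_ball_lt_top.ne
  have hint : IntegrableOn w (Metric.ball x₀ r) :=
    (hw.continuousOn.integrableOn_compact (isCompact_closedBall x₀ r)).mono_set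
      Metric.ball_subset_closedBall
  rw [← lintegral_const_mul' _ _ (ENNReal.inv_ne_top.2 hV0)]
  refine lintegral_mono fun x => ?_
  have h1 : ∫ y in Metric.ball x₀ r, (w x - w y) = volume.real (Metric.ball x₀ r) • w x := by
    have hc : IntegrableOn (fun _ => w x) (Metric.ball x₀ r) := integrableOn_const hVt
    rw [integral_sub hc hint, h0, sub_zero, setIntegral_const]
  have h2 := enorm_integral_le_lintegral_enorm (μ := volume.restrict (Metric.ball x₀ r))
    (fun y => w x - w y)
  rw [h1, enorm_smul] at h2
  have h3 : ‖volume.real (Metric.ball x₀ r)‖ₑ = V := by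
    rw [Real.enorm_eq_ofReal measureReal_nonneg, ofReal_measureReal hVt]
  rw [h3] at h2
  have h4 := (pow_le_pow_left' h2 2).trans (aux_cs _ _
    (by apply Continuous.aemeasurable; fun_prop))
  rw [Measure.restrict_apply_univ, ← hV, mul_pow, sq V, mul_assoc] at h4
  have h5 := (ENNReal.mul_le_mul_iff_right hV0 hVt).1 h4
  rw [mul_comm, ← div_eq_mul_inv]
  rw [ENNReal.le_div_iff_mul_le (Or.inl hV0) (Or.inl hVt), mul_comm]
  exact h5

lemma aux_sq (a b : ℝ≥0∞) : (a + b) ^ 2 ≤ 4 * (a ^ 2 + b ^ 2) := by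
  have key : ∀ a b : ℝ≥0∞, a ≤ b → (a + b) ^ 2 ≤ 4 * (a ^ 2 + b ^ 2) := by
    intro a b h
    calc (a + b) ^ 2 ≤ (b + b) ^ 2 := by gcongr
      _ = 4 * b ^ 2 := by ring
      _ ≤ _ := by gcongr; exact le_add_self
  rcases le_total a b with h | h
  · exact key a b h
  · rw [add_comm a b, add_comm (a ^ 2)]; exact key b a h

lemma aux_pt {n : ℕ} {F : Type} [NormedAddCommGroup F] [NormedSpace ℝ F] [CompleteSpace F]
    (γ : ℝ) (w : EuclideanSpace ℝ (Fin n) → F) (hw : ContDiff ℝ 1 w)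
    (x y : EuclideanSpace ℝ (Fin n)) :
    ENNReal.ofReal (‖w x - w y‖ ^ 2 / ‖x - y‖ ^ γ) ≤ 4 *
      (ENNReal.ofReal (‖x - y‖ ^ (2 - γ)) *
        (∫⁻ t in Set.Ioc (0 : ℝ) (1 / 2), ‖fderiv ℝ w (x + t • (y - x))‖ₑ ^ 2) +
      ENNReal.ofReal (‖y - x‖ ^ (2 - γ)) *
        (∫⁻ t in Set.Ioc (0 : ℝ) (1 / 2), ‖fderiv ℝ w (y + t • (x - y))‖ₑ ^ 2)) := by
  by_cases hxy : x = y
  · subst hxy; simp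
  have hpos : 0 < ‖x - y‖ := norm_pos_iff.2 (sub_ne_zero.2 hxy)
  have h1 := aux_path w hw x y
  have h2 := aux_path w hw y x
  rw [show y + (1 / 2 : ℝ) • (x - y) = x + (1 / 2 : ℝ) • (y - x) by module] at h2
  set m := x + (1 / 2 : ℝ) • (y - x)
  have h3 : ‖w x - w y‖ₑ ^ 2 ≤ 4 * (‖w x - w m‖ₑ ^ 2 + ‖w y - w m‖ₑ ^ 2) := by
    refine le_trans ?_ (aux_sq _ _)
    gcongr
    rw [show w x - w y = (w x - w m) - (w y - w m) by abel]
    exact enorm_sub_le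
  rw [norm_sub_rev y x] at h2 ⊢
  have hk : ENNReal.ofReal (‖x - y‖ ^ (2 - γ)) =
      ENNReal.ofReal (‖x - y‖ ^ (-γ)) * ENNReal.ofReal (‖x - y‖ ^ 2) := by
    rw [← ENNReal.ofReal_mul (by positivity), ← Real.rpow_natCast, ← Real.rpow_add hpos]
    congr 2; push_cast; ring
  rw [div_eq_mul_inv, ← Real.rpow_neg hpos.le, mul_comm, ENNReal.ofReal_mul (by positivity),
    ENNReal.ofReal_pow (norm_nonneg _), ofReal_norm, hk]
  calc _ ≤ ENNReal.ofReal (‖x - y‖ ^ (-γ)) * (4 * (‖w x - w m‖ₑ ^ 2 + ‖w y - w m‖ₑ ^ 2)) := by gcongr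
    _ ≤ ENNReal.ofReal (‖x - y‖ ^ (-γ)) * (4 * (ENNReal.ofReal (‖x - y‖ ^ 2) *
      (∫⁻ t in Set.Ioc (0 : ℝ) (1 / 2), ‖fderiv ℝ w (x + t • (y - x))‖ₑ ^ 2) +
      ENNReal.ofReal (‖x - y‖ ^ 2) *
      (∫⁻ t in Set.Ioc (0 : ℝ) (1 / 2), ‖fderiv ℝ w (y + t • (x - y))‖ₑ ^ 2))) := by
        gcongr
    _ = _ := by ring

lemma aux_inner {n : ℕ} (s : ℝ) (hs : -(n : ℝ) < s) (x₀ : EuclideanSpace ℝ (Fin n)) (r : ℝ)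
    (g : EuclideanSpace ℝ (Fin n) → ℝ≥0∞) (hg : Measurable g)
    (y : EuclideanSpace ℝ (Fin n)) (hy : y ∈ Metric.ball x₀ r) :
    ∫⁻ x in Metric.ball x₀ r, ENNReal.ofReal (‖x - y‖ ^ s) *
        (∫⁻ t in Set.Ioc (0 : ℝ) (1 / 2), g (x + t • (y - x))) ≤
      ENNReal.ofReal (2 ^ (n + s)) *
        ∫⁻ z in Metric.ball x₀ r, ENNReal.ofReal (‖z - y‖ ^ s) * g z := by
  set G := (Metric.ball x₀ r).indicator g with hGdef
  have hG : Measurable G := hg.indicator measurableSet_ball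
  calc _ ≤ ∫⁻ x in Metric.ball x₀ r, ∫⁻ t in Set.Ioc (0 : ℝ) (1 / 2),
          ENNReal.ofReal (‖x - y‖ ^ s) * G (x + t • (y - x)) := by
        refine setLIntegral_mono' measurableSet_ball fun x hx => ?_
        rw [lintegral_const_mul _ (by fun_prop)]
        refine mul_le_mul_right ?_ _
        refine setLIntegral_mono' (measurableSet_Ioc (a := (0 : ℝ)) (b := 1 / 2)) fun t ht => ?_
        rw [hGdef, Set.indicator_of_mem]
        exact (convex_ball x₀ r).add_smul_sub_mem hx hy ⟨ht.1.le, ht.2.trans (by norm_num)⟩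
    _ ≤ ∫⁻ x, ∫⁻ t in Set.Ioc (0 : ℝ) (1 / 2),
          ENNReal.ofReal (‖x - y‖ ^ s) * G (x + t • (y - x)) := setLIntegral_le_lintegral _ _
    _ = ∫⁻ t in Set.Ioc (0 : ℝ) (1 / 2), ∫⁻ x,
          ENNReal.ofReal (‖x - y‖ ^ s) * G (x + t • (y - x)) :=
        lintegral_lintegral_swap (by
          apply Measurable.aemeasurable
          unfold Function.uncurry
          fun_prop)
    _ ≤ ∫⁻ t in Set.Ioc (0 : ℝ) (1 / 2), ENNReal.ofReal (2 ^ (n + s)) *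
          ∫⁻ z, ENNReal.ofReal (‖z - y‖ ^ s) * G z :=
        setLIntegral_mono' measurableSet_Ioc fun t ht => aux_sub s hs t ht.2 G hG y
    _ ≤ (ENNReal.ofReal (2 ^ (n + s)) * ∫⁻ z, ENNReal.ofReal (‖z - y‖ ^ s) * G z) * 1 := by
        rw [lintegral_const]
        gcongr
        simp only [Measure.restrict_apply_univ, Real.volume_Ioc]
        rw [ENNReal.ofReal_le_one]; norm_num
    _ = _ := by
        rw [mul_one, ← lintegral_indicator measurableSet_ball]
        congr 2; funext z
        by_cases hz : z ∈ Metric.ball x₀ r <;> simp [hGdef, hz]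

lemma aux_main {n : ℕ} (hn : 1 ≤ n) (γ : ℝ) (hγ : γ < (n : ℝ) + 2) :
    ∃ C : ℝ, 0 ≤ C ∧ ∀ (F : Type) [NormedAddCommGroup F] [NormedSpace ℝ F] [CompleteSpace F]
      (r : ℝ), 0 < r → ∀ (x₀ : EuclideanSpace ℝ (Fin n)) (w : EuclideanSpace ℝ (Fin n) → F),
      ContDiff ℝ 1 w →
      ∫⁻ x in Metric.ball x₀ r, ∫⁻ y in Metric.ball x₀ r,
        ENNReal.ofReal (‖w x - w y‖ ^ 2 / ‖x - y‖ ^ γ) ≤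
      ENNReal.ofReal (C * r ^ (n + (2 - γ))) *
        ∫⁻ x in Metric.ball x₀ r, ‖fderiv ℝ w x‖ₑ ^ 2 := by
  have hs : -(n : ℝ) < 2 - γ := by linarith
  generalize hsdef : 2 - γ = s at hs
  obtain ⟨K, hK, hKR⟩ := aux_ball hn s hs
  refine ⟨8 * 2 ^ (n + s) * (K * 2 ^ (n + s)), by positivity, ?_⟩
  intro F _ _ _ r hr x₀ w hw
  set g : EuclideanSpace ℝ (Fin n) → ℝ≥0∞ := fun z => ‖fderiv ℝ w z‖ₑ ^ 2 with hg
  have hd : Continuous (fderiv ℝ w) := hw.continuous_fderiv one_ne_zero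
  have hgm : Measurable g := by apply Continuous.measurable; fun_prop
  set A : EuclideanSpace ℝ (Fin n) → EuclideanSpace ℝ (Fin n) → ℝ≥0∞ := fun x y =>
    ENNReal.ofReal (‖x - y‖ ^ s) * ∫⁻ t in Set.Ioc (0 : ℝ) (1 / 2), g (x + t • (y - x)) with hA
  have hAm : Measurable (Function.uncurry A) := by
    simp only [hA, Function.uncurry_def]
    apply Measurable.mul (by fun_prop)
    apply Measurable.lintegral_prod_right' (f := fun q : (EuclideanSpace ℝ (Fin n) ×
      EuclideanSpace ℝ (Fin n)) × ℝ => g (q.1.1 + q.2 • (q.1.2 - q.1.1)))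
    fun_prop
  have hA1 : ∀ x, Measurable (A x) := fun x => hAm.of_uncurry_left
  set B := Metric.ball x₀ r with hB
  have hswap : ∫⁻ x in B, ∫⁻ y in B, A x y = ∫⁻ y in B, ∫⁻ x in B, A x y :=
    lintegral_lintegral_swap hAm.aemeasurable
  have hbound : ∫⁻ y in B, ∫⁻ x in B, A x y ≤ ENNReal.ofReal (2 ^ (n + s)) *
      (ENNReal.ofReal (K * (2 * r) ^ (n + s)) * ∫⁻ z in B, g z) := by
    calc _ ≤ ∫⁻ y in B, ENNReal.ofReal (2 ^ (n + s)) *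
          ∫⁻ z in B, ENNReal.ofReal (‖z - y‖ ^ s) * g z :=
          setLIntegral_mono' measurableSet_ball fun y hy => aux_inner s hs x₀ r g hgm y hy
      _ = ENNReal.ofReal (2 ^ (n + s)) * ∫⁻ y in B,
          ∫⁻ z in B, ENNReal.ofReal (‖z - y‖ ^ s) * g z :=
          lintegral_const_mul' _ _ ENNReal.ofReal_ne_top
      _ = ENNReal.ofReal (2 ^ (n + s)) * ∫⁻ z in B,
          ∫⁻ y in B, ENNReal.ofReal (‖z - y‖ ^ s) * g z := by
          congr 1
          refine lintegral_lintegral_swap (Measurable.aemeasurable ?_)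
          unfold Function.uncurry
          fun_prop
      _ ≤ _ := by
          rw [← lintegral_const_mul _ hgm]
          refine mul_le_mul_right ?_ _
          refine setLIntegral_mono' (measurableSet_ball (x := x₀) (ε := r)) fun z hz => ?_
          rw [lintegral_mul_const _ (by fun_prop)]
          gcongr ?_ * _
          rw [← hKR _ (by positivity), ← lintegral_indicator measurableSet_ball,
            ← lintegral_indicator measurableSet_ball,
            ← lintegral_sub_left_eq_self ((Metric.ball 0 (2 * r)).indicator _) z]
          refine lintegral_mono fun y => ?_
          by_cases hy : y ∈ B
          · rw [Set.indicator_of_mem hy, Set.indicator_of_mem]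
            rw [mem_ball_zero_iff, ← dist_eq_norm]
            calc dist z y ≤ dist z x₀ + dist y x₀ := dist_triangle_right _ _ _
              _ < r + r := add_lt_add hz hy
              _ = 2 * r := by ring
          · rw [Set.indicator_of_notMem hy]; exact zero_le
  have hm2 : Measurable fun x => ∫⁻ y in B, A x y := hAm.lintegral_prod_right'
  calc _ ≤ ∫⁻ x in B, ∫⁻ y in B, 4 * (A x y + A y x) := by
        refine lintegral_mono fun x => lintegral_mono fun y => ?_
        have := aux_pt γ w hw x y
        rw [hsdef] at this
        exact this
    _ = 4 * ((∫⁻ x in B, ∫⁻ y in B, A x y) + ∫⁻ x in B, ∫⁻ y in B, A y x) := by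
        simp_rw [lintegral_const_mul' _ _ (show (4 : ℝ≥0∞) ≠ ⊤ by simp)]
        congr 1
        rw [← lintegral_add_left hm2]
        congr 1; funext x
        rw [lintegral_add_left (hA1 x)]
    _ = 8 * ∫⁻ y in B, ∫⁻ x in B, A x y := by rw [hswap]; ring
    _ ≤ 8 * (ENNReal.ofReal (2 ^ (n + s)) *
      (ENNReal.ofReal (K * (2 * r) ^ (n + s)) * ∫⁻ z in B, g z)) := by gcongr
    _ = _ := by
        rw [show (8 : ℝ≥0∞) = ENNReal.ofReal 8 by simp, ← mul_assoc, ← mul_assoc,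
          ← ENNReal.ofReal_mul (by positivity), ← ENNReal.ofReal_mul (by positivity)]
        congr 2
        rw [Real.mul_rpow two_pos.le hr.le]; ring

theorem stmt14 (n : ℕ) (hn : 1 ≤ n) (γ : ℝ) (hγ0 : 0 ≤ γ) (hγ : γ < (n : ℝ) + 2)
    (N : ℕ) (hN : 1 ≤ N) :
    ∃ C : ℝ, 0 < C ∧
      ∀ (r : ℝ), 0 < r → ∀ (x₀ : EuclideanSpace ℝ (Fin n))
        (v : EuclideanSpace ℝ (Fin n) → ℝ), ContDiff ℝ (⊤ : ℕ∞) v →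
        (∀ k : ℕ, k ≤ N → (∫ x in Metric.ball x₀ r, iteratedFDeriv ℝ k v x) = 0) →
        (∫⁻ x in Metric.ball x₀ r, ∫⁻ y in Metric.ball x₀ r,
            ENNReal.ofReal (|v x - v y| ^ 2 / ‖x - y‖ ^ γ)) ≤
          ENNReal.ofReal (C * r ^ (2 * (N : ℝ) - γ)) *
            ∫⁻ x in Metric.ball x₀ r, ∫⁻ y in Metric.ball x₀ r,
              ENNReal.ofReal (‖iteratedFDeriv ℝ N v x - iteratedFDeriv ℝ N v y‖ ^ 2) := by
  obtain ⟨C₁, hC₁, h₁⟩ := aux_main hn γ hγ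
  obtain ⟨C₀, hC₀, h₀⟩ := aux_main (n := n) hn 0 (by positivity)
  obtain ⟨M, rfl⟩ : ∃ M, N = M + 1 := ⟨N - 1, by omega⟩
  set b : ℝ := (volume.real (Metric.ball (0 : EuclideanSpace ℝ (Fin n)) 1))⁻¹ with hb
  have hVr : 0 < volume.real (Metric.ball (0 : EuclideanSpace ℝ (Fin n)) 1) :=
    ENNReal.toReal_pos (Metric.measure_ball_pos _ _ one_pos).ne' measure_ball_lt_top.ne
  have hb0 : 0 < b := inv_pos.2 hVr
  refine ⟨C₁ * (b * C₀) ^ M * b + 1, by positivity, ?_⟩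
  intro r hr x₀ v hv hmean
  have hV : (volume (Metric.ball x₀ r))⁻¹ = ENNReal.ofReal (b * r ^ (-(n : ℝ))) := by
    rw [Measure.addHaar_ball_of_pos _ _ hr, ← ofReal_measureReal (measure_ball_lt_top (x := (0 : EuclideanSpace ℝ (Fin n))) (r := 1)).ne,
      ← ENNReal.ofReal_mul (by positivity), ← ENNReal.ofReal_inv_of_pos (by positivity)]
    congr 1
    rw [hb, mul_inv, Real.rpow_neg hr.le, mul_comm]
    simp
  have hcd : ∀ k : ℕ, ContDiff ℝ 1 (iteratedFDeriv ℝ k v) := fun k =>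
    hv.iteratedFDeriv_right (by exact_mod_cast le_top)
  have hen : ∀ (k : ℕ) x y, ENNReal.ofReal (‖iteratedFDeriv ℝ k v x - iteratedFDeriv ℝ k v y‖ ^ 2)
      = ‖iteratedFDeriv ℝ k v x - iteratedFDeriv ℝ k v y‖ₑ ^ 2 := fun k x y => by
    rw [ENNReal.ofReal_pow (norm_nonneg _), ofReal_norm]
  have hder : ∀ (k : ℕ) x, ‖fderiv ℝ (iteratedFDeriv ℝ k v) x‖ₑ = ‖iteratedFDeriv ℝ (k + 1) v x‖ₑ :=
    fun k x => by rw [← ofReal_norm, norm_fderiv_iteratedFDeriv, ofReal_norm]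
  have havg : ∀ k : ℕ, k ≤ M + 1 → ∫⁻ x in Metric.ball x₀ r, ‖iteratedFDeriv ℝ k v x‖ₑ ^ 2 ≤
      ENNReal.ofReal (b * r ^ (-(n : ℝ))) * ∫⁻ x in Metric.ball x₀ r, ∫⁻ y in Metric.ball x₀ r,
        ENNReal.ofReal (‖iteratedFDeriv ℝ k v x - iteratedFDeriv ℝ k v y‖ ^ 2) := by
    intro k hk
    simp_rw [hen]
    rw [← hV]
    exact aux_avg _ (hcd k).continuous x₀ r hr (hmean k hk)
  have hstep : ∀ k : ℕ, k ≤ M → ∫⁻ x in Metric.ball x₀ r, ‖iteratedFDeriv ℝ k v x‖ₑ ^ 2 ≤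
      ENNReal.ofReal (b * C₀ * r ^ 2) *
        ∫⁻ x in Metric.ball x₀ r, ‖iteratedFDeriv ℝ (k + 1) v x‖ₑ ^ 2 := by
    intro k hk
    have h := h₀ _ r hr x₀ _ (hcd k)
    simp only [Real.rpow_zero, div_one, hder] at h
    refine (havg k (by omega)).trans ((mul_le_mul_right h _).trans_eq ?_)
    rw [← mul_assoc, ← ENNReal.ofReal_mul (by positivity)]
    congr 2
    rw [Real.rpow_neg hr.le, Real.rpow_add hr]
    have := (Real.rpow_pos_of_pos hr n).ne'
    field_simp
    norm_num
  have hiter : ∀ m : ℕ, m ≤ M → ∫⁻ x in Metric.ball x₀ r, ‖iteratedFDeriv ℝ 1 v x‖ₑ ^ 2 ≤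
      ENNReal.ofReal ((b * C₀ * r ^ 2) ^ m) *
        ∫⁻ x in Metric.ball x₀ r, ‖iteratedFDeriv ℝ (m + 1) v x‖ₑ ^ 2 := by
    intro m
    induction m with
    | zero => intro _; simp
    | succ m ih =>
      intro hm
      refine (ih (by omega)).trans ((mul_le_mul_right (hstep (m + 1) hm) _).trans_eq ?_)
      rw [← mul_assoc, ← ENNReal.ofReal_mul (by positivity), ← pow_succ]
  have hfirst := h₁ ℝ r hr x₀ v (hv.of_le (by exact_mod_cast le_top))
  have hd1 : ∀ x, ‖fderiv ℝ v x‖ₑ = ‖iteratedFDeriv ℝ 1 v x‖ₑ := fun x => by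
    rw [← ofReal_norm, ← norm_iteratedFDeriv_one, ofReal_norm]
  simp only [hd1, Real.norm_eq_abs] at hfirst
  refine hfirst.trans ((mul_le_mul_right ((hiter M le_rfl).trans
    (mul_le_mul_right (havg (M + 1) le_rfl) _)) _).trans ?_)
  rw [← mul_assoc, ← mul_assoc, ← ENNReal.ofReal_mul (by positivity),
    ← ENNReal.ofReal_mul (by positivity)]
  gcongr ENNReal.ofReal ?_ * _
  have e : r ^ (2 * ((M + 1 : ℕ) : ℝ) - γ) = r ^ (n + (2 - γ)) * (r ^ 2) ^ M * r ^ (-(n : ℝ)) := by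
    rw [← pow_mul, ← Real.rpow_natCast, ← Real.rpow_add hr, ← Real.rpow_add hr]
    congr 1; push_cast; ring
  rw [e, mul_pow (b * C₀)]
  have : 0 ≤ r ^ (n + (2 - γ)) * (r ^ 2) ^ M * r ^ (-(n : ℝ)) := by positivity
  linarith
end
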